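/- For a real number w and a natural number t, define r_t^w(x) = (-x)_t (x+w)_t / t!. Then for every integer M \ge 1 and all real numbers x and w: \sum_{j=0}^{M} (x)_j \binom{x+w+M-1}{j} \, r^{w}_{M-j}(x) = 0. (This is the identity \sum_{j=0}^{m+k} s^{n+k-l}_j(x) \, r_{m+k-j}^{u+n-1-l}(x) = 0, with s_j^{u,m,n}(x) = (x)_j \binom{x+u+n+m-2}{j}, valid for l \ge 0, k \in \mathbb{Z} and m \ge \max\{0, -k+1\}, after the substitutions M = m+k and w = u+n-1-l.) -/

import Mathlib

/-- The generalized binomial coefficient `y choose l = y(y-1)⋯(y-l+1)/l!`. -/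
noncomputable def gbinom (y : ℝ) (l : ℕ) : ℝ :=
  (∏ k ∈ Finset.range l, (y - k)) / l.factorial

/-- The Pochhammer symbol `(y)_l = y (y+1) ⋯ (y+l-1)`. -/
noncomputable def poch (y : ℝ) (l : ℕ) : ℝ := ∏ k ∈ Finset.range l, (y + k)

/-- The polynomial `r_t^w(x) = (-x)_t (x+w)_t / t!`. -/
noncomputable def rpol (w : ℝ) (t : ℕ) (x : ℝ) : ℝ :=
  poch (-x) t * poch (x + w) t / t.factorial

lemma poch_succ (y : ℝ) (n : ℕ) : poch y (n + 1) = poch y n * (y + n) := by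
  simp [poch, Finset.prod_range_succ]

lemma poch_succ_left (y : ℝ) (n : ℕ) : poch y (n + 1) = y * poch (y + 1) n := by
  unfold poch
  rw [Finset.prod_range_succ', mul_comm]
  congr 1
  · simp
  · apply Finset.prod_congr rfl
    intro k _
    push_cast
    ring

lemma fall_mul_poch (z : ℝ) (j t : ℕ) :
    (∏ k ∈ Finset.range j, (z + ((j + t : ℕ) : ℝ) - 1 - k)) * poch z t = poch z (j + t) := by
  induction j with
  | zero => simp
  | succ j ih =>
    rw [Finset.prod_range_succ', show j + 1 + t = (j + t) + 1 by ring, poch_succ, ← ih]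
    have : ∀ k ∈ Finset.range j, (z + ((j + t + 1 : ℕ) : ℝ) - 1 - ((k + 1 : ℕ) : ℝ))
        = z + ((j + t : ℕ) : ℝ) - 1 - k := by
      intro k _
      push_cast
      ring
    rw [Finset.prod_congr rfl this]
    push_cast
    ring

lemma partial_sum (x : ℝ) (n : ℕ) : ∀ t : ℕ,
    ∑ j ∈ Finset.range (n + 1), poch x j / j.factorial *
      (poch (-x) (n + 1 + t - j) / (n + 1 + t - j).factorial)
    = poch (x + 1) n / n.factorial * (poch (-x) (t + 1) / t.factorial) / (n + 1 + t) := by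
  induction n with
  | zero =>
    intro t
    have h : ((t : ℝ) + 1) ≠ 0 := by positivity
    have h2 : (1 + (t : ℝ)) ≠ 0 := by positivity
    have h3 : (t.factorial : ℝ) ≠ 0 := by positivity
    simp [poch, add_comm 0, add_comm 1 t, Nat.factorial_succ]
    field_simp
    ring
  | succ n ih =>
    intro t
    rw [Finset.sum_range_succ]
    have := ih (t + 1)
    rw [show n + 1 + (t + 1) = n + 1 + 1 + t by ring] at this
    rw [this, show n + 1 + 1 + t - (n + 1) = t + 1 by omega, poch_succ_left x,
      poch_succ (x + 1), poch_succ (-x) (t + 1), Nat.factorial_succ, Nat.factorial_succ]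
    have h3 : (t.factorial : ℝ) ≠ 0 := by positivity
    have h4 : (n.factorial : ℝ) ≠ 0 := by positivity
    have h5 : (n : ℝ) + 1 ≠ 0 := by positivity
    have h6 : (t : ℝ) + 1 ≠ 0 := by positivity
    have h7 : (n : ℝ) + 1 + (t + 1) ≠ 0 := by positivity
    have h8 : (n : ℝ) + 1 + 1 + t ≠ 0 := by positivity
    push_cast
    rw [show (n : ℝ) + 1 + (t + 1) = n + 1 + 1 + t by ring]
    field_simp
    ring

/-- the identity
`∑_{j=0}^{M} (x)_j C(x+w+M-1, j) r^w_{M-j}(x) = 0` for `M ≥ 1`. -/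
theorem sum_s_r_eq_zero (M : ℕ) (hM : 1 ≤ M) (x w : ℝ) :
    ∑ j ∈ Finset.range (M + 1),
      poch x j * gbinom (x + w + M - 1) j * rpol w (M - j) x = 0 := by
  have key : ∀ j ∈ Finset.range (M + 1),
      poch x j * gbinom (x + w + M - 1) j * rpol w (M - j) x
      = poch (x + w) M * (poch x j / j.factorial * (poch (-x) (M - j) / (M - j).factorial)) := by
    intro j hj
    obtain ⟨t, rfl⟩ := Nat.exists_eq_add_of_le (Nat.lt_succ_iff.mp (Finset.mem_range.mp hj))
    rw [← fall_mul_poch, Nat.add_sub_cancel_left]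
    unfold gbinom rpol
    ring
  rw [Finset.sum_congr rfl key, ← Finset.mul_sum]
  obtain ⟨n, rfl⟩ := Nat.exists_eq_add_of_le' hM
  rw [Finset.sum_range_succ]
  have := partial_sum x n 0
  simp only [add_zero] at this
  rw [this, poch_succ_left x, Nat.factorial_succ]
  have h4 : (n.factorial : ℝ) ≠ 0 := by positivity
  have h5 : (n : ℝ) + 1 ≠ 0 := by positivity
  simp [poch]
  right
  field_simp
  ring
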